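/- arXiv:1707.09652 — 2 statements merged into one kernel-verified Lean document; each statement's English description precedes it below -/
import Mathlib

section
/- Let F be a finite field of cardinality Q, let k and r be natural numbers, and let A be an r × k integer matrix such that the subgroup R(A) of ℤ^k generated by the rows of A contains (Q−1)·ℤ^k. Then the number of k-tuples (x₁, …, x_k) of nonzero elements of F satisfying x₁^{A_{i1}} · x₂^{A_{i2}} ⋯ x_k^{A_{ik}} = 1 for every row index i equals the index of R(A) in ℤ^k, i.e., the cardinality of ℤ^k / R(A). -/
/-!
Evaluating Laurent monomials at a tuple of units identifies the tuples with the homomorphisms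
from `ℤ^k` to the unit group, and the solutions of the monomial equations with the homomorphisms
that factor through `ℤ^k / R(A)`. This quotient is a finite abelian group whose exponent divides
`Q - 1`, and the units are cyclic of order `Q - 1`, so duality of finite abelian groups gives it
exactly as many such homomorphisms as it has elements.
-/

/-- The universal property of the quotient `M ⧸ p`, as a bijection. -/
def linearMapQuotientEquiv {R M : Type*} [Ring R] [AddCommGroup M] [Module R M]
    (p : Submodule R M) (N : Type*) [AddCommGroup N] [Module R N] :
    (M ⧸ p →ₗ[R] N) ≃ {f : M →ₗ[R] N // p ≤ LinearMap.ker f} where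
  toFun g := ⟨g ∘ₗ p.mkQ, by
    simpa only [Submodule.ker_mkQ] using LinearMap.ker_le_ker_comp p.mkQ g⟩
  invFun f := p.liftQ f.1 f.2
  left_inv g := Submodule.linearMap_qext p (p.liftQ_mkQ _ _)
  right_inv f := Subtype.ext (p.liftQ_mkQ f.1 f.2)

section Monomials

variable {ι κ G : Type*} [Fintype κ] [CommGroup G]

/-- A tuple `x` of elements of `G`, regarded as the homomorphism sending an exponent vector `v` to
the value of the Laurent monomial with exponents `v` at `x`. The target is `Additive G`, so that the
row span, a `ℤ`-submodule, can be compared with the kernel of a `ℤ`-linear map. -/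
noncomputable def monomialEvalEquiv : (κ → G) ≃ ((κ → ℤ) →ₗ[ℤ] Additive G) :=
  (Equiv.arrowCongr (Equiv.refl κ) Additive.ofMul).trans
    ((Pi.basisFun ℤ κ).constr ℤ (M' := Additive G)).toEquiv

theorem monomialEvalEquiv_apply (x : κ → G) (v : κ → ℤ) :
    monomialEvalEquiv x v = Additive.ofMul (∏ j, x j ^ v j) := by
  simp [monomialEvalEquiv, Module.Basis.constr_apply_fintype, ← ofMul_zpow, ← ofMul_prod]

theorem span_range_le_ker_monomialEvalEquiv_iff (A : Matrix ι κ ℤ) (x : κ → G) :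
    Submodule.span ℤ (Set.range A) ≤ LinearMap.ker (monomialEvalEquiv x) ↔
      ∀ i, ∏ j, x j ^ A i j = 1 :=
  Submodule.span_le.trans <| Set.range_subset_iff.trans <| forall_congr' fun i => by
    rw [SetLike.mem_coe, LinearMap.mem_ker, monomialEvalEquiv_apply, ofMul_eq_zero]

/-- Solutions of the monomial equations with exponent matrix `A` correspond to homomorphisms out of
the quotient of `ℤ^κ` by the row span of `A`. -/
noncomputable def monomialSolutionsEquiv (A : Matrix ι κ ℤ) :
    {x : κ → G // ∀ i, ∏ j, x j ^ A i j = 1} ≃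
      (((κ → ℤ) ⧸ Submodule.span ℤ (Set.range A)) →ₗ[ℤ] Additive G) :=
  (monomialEvalEquiv.subtypeEquiv fun x =>
    (span_range_le_ker_monomialEvalEquiv_iff A x).symm).trans
      (linearMapQuotientEquiv _ (Additive G)).symm

end Monomials

theorem finite_of_isTorsionBy_natCast {Y : Type*} [AddCommGroup Y] [Module.Finite ℤ Y] {n : ℕ}
    [NeZero n] (hY : Module.IsTorsionBy ℤ Y n) : Finite Y :=
  Module.finite_of_fg_torsion Y fun {y} =>
    ⟨⟨n, mem_nonZeroDivisors_of_ne_zero (NeZero.ne _)⟩, hY (x := y)⟩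

theorem card_linearMap_additive_units {Y : Type*} [AddCommGroup Y] [Module.Finite ℤ Y] {n : ℕ}
    [NeZero n] (hY : Module.IsTorsionBy ℤ Y n) (M : Type*) [CommMonoid M]
    [HasEnoughRootsOfUnity M n] :
    Nat.card (Y →ₗ[ℤ] Additive Mˣ) = Nat.card Y := by
  have : Finite Y := finite_of_isTorsionBy_natCast hY
  have exponent_dvd : Monoid.exponent (Multiplicative Y) ∣ n :=
    Monoid.exponent_dvd_of_forall_pow_eq_one fun y =>
      (natCast_zsmul y.toAdd n).symm.trans (hY (x := y.toAdd))
  have : HasEnoughRootsOfUnity M (Monoid.exponent (Multiplicative Y)) :=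
    HasEnoughRootsOfUnity.of_dvd M exponent_dvd
  calc
    Nat.card (Y →ₗ[ℤ] Additive Mˣ) = Nat.card (Multiplicative Y →* Mˣ) :=
      Nat.card_congr <|
        (addMonoidHomLequivInt ℤ).symm.toEquiv.trans AddMonoidHom.toMultiplicativeLeft
    _ = Nat.card (Multiplicative Y) := CommGroup.card_monoidHom_of_hasEnoughRootsOfUnity _ M
    _ = Nat.card Y := Nat.card_congr Multiplicative.toAdd

theorem hasEnoughRootsOfUnity_card_units (M : Type*) [CommMonoid M] [IsCyclic Mˣ] :
    HasEnoughRootsOfUnity M (Nat.card Mˣ) where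
  prim :=
    have ⟨g, hg⟩ := IsCyclic.exists_ofOrder_eq_natCard (α := Mˣ)
    ⟨g, IsPrimitiveRoot.coe_units_iff.mpr (hg ▸ IsPrimitiveRoot.orderOf g)⟩
  cyc := inferInstance

theorem card_monomial_solutions_eq_index_general {ι κ M : Type*} [Fintype κ] [CommMonoid M]
    (n : ℕ) [NeZero n] [HasEnoughRootsOfUnity M n] (A : Matrix ι κ ℤ)
    (hA : ∀ v : κ → ℤ, (n : ℤ) • v ∈ Submodule.span ℤ (Set.range A)) :
    Nat.card {x : κ → Mˣ // ∀ i, ∏ j, x j ^ A i j = 1} =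
      Nat.card ((κ → ℤ) ⧸ Submodule.span ℤ (Set.range A)) :=
  (Nat.card_congr (monomialSolutionsEquiv A)).trans <|
    card_linearMap_additive_units ((Module.isTorsionBy_quotient_iff _ _).mpr hA) M

/-- Let `F` be a finite field of cardinality `Q`, and let `A` be an `r × k` integer
matrix whose row span `R(A)` contains `(Q-1)·ℤ^k`. Then the number of `k`-tuples of
nonzero elements of `F` satisfying the monomial equations given by the rows of `A`
equals the index of `R(A)` in `ℤ^k`. -/
theorem card_monomial_solutions_eq_index (F : Type*) [Field F] [Fintype F]
    (Q : ℕ) (hQ : Fintype.card F = Q) (k r : ℕ) (A : Matrix (Fin r) (Fin k) ℤ)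
    (hQA : ∀ v : Fin k → ℤ, ((Q : ℤ) - 1) • v ∈ Submodule.span ℤ (Set.range A)) :
    Nat.card {x : Fin k → Fˣ // ∀ i : Fin r, (∏ j : Fin k, x j ^ A i j) = 1} =
      Nat.card ((Fin k → ℤ) ⧸ Submodule.span ℤ (Set.range A)) := by
  have := hasEnoughRootsOfUnity_card_units F
  exact card_monomial_solutions_eq_index_general (Nat.card Fˣ) A <| by
    simpa [← hQ, ← Nat.card_eq_fintype_card, Nat.card_eq_card_units_add_one] using hQA
end

section
/- Let n and k be positive integers and let A be a matrix over ℤ[X] with k columns whose rows include, for each j with 1 ≤ j ≤ k, the row (X^n − 1)·e_j (the vector with X^n − 1 in position j and 0 elsewhere). Then there exist an integer polynomial f, a natural number r, rational numbers α, α₁, …, α_r, integers m₁, …, m_r with m_i > 1, and integers n₁, …, n_r with 0 < n_i < m_i, such that for every integer q ≥ 2, the number of vectors y ∈ (ℤ/(q^n − 1)ℤ)^k satisfying A(q)·y = 0 equals (α + Σ_{i=1}^{r} α_i · gcd(q − n_i, m_i)) · |f(q)|, where A(q) denotes the integer matrix obtained by evaluating every entry of A at q. -/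
/-!
Modulo `M = q ^ n - 1`, the solutions of `A(q) y = 0` are as many as the index of the row lattice
of `A(q)` in `ℤ ^ k`, because that lattice contains `M ℤ ^ k`. This index is the gcd of the maximal
minors of `A(q)`, so it is the norm of the ideal `I` of maximal minors of `A`, evaluated at `q`.

Over the principal ideal ring `ℚ[X]` the ideal `I` has one generator; clearing denominators,
`E I = f J` for a polynomial `f`, an integer `E ≠ 0` and an ideal `J` of `ℤ[X]` containing `E`.
As `E ∈ J`, the value of `J` at `q` depends only on `q` modulo `E`, and the count is `|f(q)|` times
a periodic function of `q`.

Finally, periodic functions are spanned by the functions `gcd(q - n, m)`: the formula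
`gcd(a, m) = ∑_{d ∣ m, d ∣ a} φ(d)` can be solved for the indicator of `m ∣ a`, and the
residue `n = 0` is superfluous because `∑_{n mod m} gcd(q - n, m)` does not depend on `q`.
-/

open Matrix Polynomial

section Matrix

variable {l ι κ R : Type*}

theorem exists_eq_mul_of_row_mem_span [Fintype ι] [CommSemiring R] {A : Matrix l κ R}
    {B : Matrix ι κ R} (h : ∀ i, A.row i ∈ Submodule.span R (Set.range B.row)) :
    ∃ C : Matrix l ι R, A = C * B := by
  simp_rw [← range_vecMulLinear, LinearMap.mem_range, vecMulLinear_apply] at h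
  choose C hC using h
  exact ⟨of C, ext_row fun i => (hC i).symm⟩

theorem exists_span_range_eq {N : Type*} [Finite κ] [CommRing R] [IsDomain R]
    [IsPrincipalIdealRing R] [AddCommGroup N] [Module R N] (b : Module.Basis κ R N)
    (L : Submodule R N) :
    ∃ v : κ → N, Submodule.span R (Set.range v) = L := by
  obtain ⟨n, s⟩ := L.smithNormalForm b
  refine ⟨Function.extend s.f (L.subtype ∘ s.bN) 0, ?_⟩
  have hzero : Submodule.span R ((0 : κ → N) '' (Set.range s.f)ᶜ) = ⊥ := by
    rw [Submodule.span_eq_bot]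
    rintro _ ⟨_, -, rfl⟩
    rfl
  rw [Set.range_extend s.f.injective, Submodule.span_union, hzero, sup_bot_eq, Set.range_comp,
    Submodule.span_image, s.bN.span_eq, L.map_subtype_top]

theorem exists_square_matrix_mul_eq_and_eq_mul [Fintype ι] [Fintype κ] [CommRing R]
    [IsDomain R] [IsPrincipalIdealRing R] (A : Matrix ι κ R) :
    ∃ (B : Matrix κ κ R) (C : Matrix ι κ R) (T : Matrix κ ι R), A = C * B ∧ B = T * A := by
  obtain ⟨v, hv⟩ := exists_span_range_eq (Pi.basisFun R κ) (Submodule.span R (Set.range A.row))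
  have hA (i : ι) : A.row i ∈ Submodule.span R (Set.range (of v).row) :=
    hv.ge (Submodule.subset_span ⟨i, rfl⟩)
  have hB (j : κ) : (of v).row j ∈ Submodule.span R (Set.range A.row) :=
    hv.le (Submodule.subset_span ⟨j, rfl⟩)
  obtain ⟨C, hC⟩ := exists_eq_mul_of_row_mem_span hA
  obtain ⟨T, hT⟩ := exists_eq_mul_of_row_mem_span hB
  exact ⟨of v, C, T, hC, hT⟩

theorem mul_eq_smul_one_symm [Fintype κ] [DecidableEq κ] [CommRing R] {c : R} (hc : IsLeftRegular c)
    {C B : Matrix κ κ R} (h : C * B = c • 1) : B * C = c • 1 := by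
  have hB : IsRightRegular B := by
    rw [← isLeftRegular_iff_isRightRegular]
    refine .of_mul (a := C) fun X Y hXY => hc.matrix ?_
    simpa [h] using hXY
  refine hB ?_
  simp [Matrix.mul_assoc, h]

theorem ker_mulVecLin_le_of_eq_mul [Fintype ι] [Fintype κ] [CommSemiring R]
    {A : Matrix l κ R} {B : Matrix ι κ R} {C : Matrix l ι R} (h : A = C * B) :
    B.mulVecLin.ker ≤ A.mulVecLin.ker := by
  rw [h, mulVecLin_mul]
  exact LinearMap.ker_le_ker_comp _ _

theorem exists_mul_eq_smul_one_of_rows [Fintype ι] [DecidableEq κ] [CommSemiring R]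
    {A : Matrix ι κ R} {p : R} (h : ∀ j, ∃ i, A i = Pi.single j p) :
    ∃ T : Matrix κ ι R, T * A = p • 1 := by
  classical
  choose e he using h
  refine ⟨(1 : Matrix ι ι R).submatrix e id, ?_⟩
  ext j l
  simp [mul_apply, he, Pi.single_apply, one_apply, eq_comm]

end Matrix

section MaximalMinors

variable {ι κ R : Type*} [Fintype κ] [DecidableEq κ] [CommRing R]

/-- The ideal generated by the maximal minors of `A`, that is, the zeroth Fitting ideal of the
module presented by `A`. A minor is indexed by a map choosing its rows; the choices that are not
injective only contribute zeros. -/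
def maximalMinorIdeal (A : Matrix ι κ R) : Ideal R :=
  Ideal.span (Set.range fun e : κ → ι => (A.submatrix e id).det)

theorem det_mul_eq_sum_prod_mul_det_submatrix [Fintype ι] (T : Matrix κ ι R) (A : Matrix ι κ R) :
    (T * A).det = ∑ e : κ → ι, (∏ i, T i (e i)) * (A.submatrix e id).det := by
  have hrow : T * A = fun i => ∑ l, T i l • A l := by
    ext i j
    simp [mul_apply, Finset.sum_apply]
  change detRowAlternating.toMultilinearMap (T * A) = _
  rw [hrow, MultilinearMap.map_sum]
  exact Finset.sum_congr rfl fun e _ => MultilinearMap.map_smul_univ _ _ _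

theorem maximalMinorIdeal_mul_le {l : Type*} [Fintype ι] (T : Matrix l ι R) (A : Matrix ι κ R) :
    maximalMinorIdeal (T * A) ≤ maximalMinorIdeal A := by
  refine Ideal.span_le.2 ?_
  rintro _ ⟨e, rfl⟩
  change (T.submatrix e id * A).det ∈ maximalMinorIdeal A
  rw [det_mul_eq_sum_prod_mul_det_submatrix]
  exact sum_mem fun e _ => Ideal.mul_mem_left _ _ (Ideal.subset_span ⟨e, rfl⟩)

theorem maximalMinorIdeal_square (B : Matrix κ κ R) :
    maximalMinorIdeal B = Ideal.span {B.det} := by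
  refine le_antisymm (Ideal.span_le.2 ?_) ((Ideal.span_singleton_le_iff_mem _).2 ?_)
  · rintro _ ⟨e, rfl⟩
    have h : B.submatrix e id = (1 : Matrix κ κ R).submatrix e id * B := by
      simpa using submatrix_mul 1 B e id id Function.bijective_id
    simp_rw [h, det_mul]
    exact Ideal.mul_mem_left _ _ (Ideal.mem_span_singleton_self _)
  · exact Ideal.subset_span ⟨id, by simp⟩

theorem map_maximalMinorIdeal {S : Type*} [CommRing S] (f : R →+* S) (A : Matrix ι κ R) :
    (maximalMinorIdeal A).map f = maximalMinorIdeal (A.map f) := by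
  simp_rw [maximalMinorIdeal, Ideal.map_span, ← Set.range_comp, Function.comp_def, RingHom.map_det,
    RingHom.mapMatrix_apply, submatrix_map]

end MaximalMinors

section Count

theorem index_range_eq_natAbs_det {N : Type*} [AddCommGroup N] [Module.Free ℤ N]
    [Module.Finite ℤ N] (f : N →ₗ[ℤ] N) (hf : Function.Injective f) :
    f.toAddMonoidHom.range.index = (LinearMap.det f).natAbs :=
  (f.range.natAbs_det_equiv (LinearEquiv.ofInjective f hf)).symm

theorem intCast_comp_mem_range_mulVecLin_iff {ι κ : Type*} [Fintype ι] [Finite κ] [DecidableEq κ]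
    {M : ℕ} {B : Matrix κ ι ℤ} {C : Matrix ι κ ℤ} (h : B * C = (M : ℤ) • 1) (x : κ → ℤ) :
    (Int.cast ∘ x : κ → ZMod M) ∈ (B.map (Int.cast : ℤ → ZMod M)).mulVecLin.range ↔
      x ∈ B.mulVecLin.range := by
  have := Fintype.ofFinite κ
  have hcast (z : ι → ℤ) :
      (Int.cast ∘ (B *ᵥ z) : κ → ZMod M) = B.map Int.cast *ᵥ (Int.cast ∘ z) :=
    funext (RingHom.map_mulVec (Int.castRingHom (ZMod M)) B z)
  constructor
  · rintro ⟨y, hy⟩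
    obtain ⟨z, rfl⟩ := ZMod.intCast_surjective.comp_left y
    have hdvd (i : κ) : (M : ℤ) ∣ x i - (B *ᵥ z) i :=
      (ZMod.intCast_eq_intCast_iff_dvd_sub _ _ M).1 (congrFun ((hcast z).trans hy) i)
    choose w hw using hdvd
    have hx : x - B *ᵥ z = (M : ℤ) • w := funext hw
    refine ⟨z + C *ᵥ w, ?_⟩
    simp [mulVec_add, mulVec_mulVec, h, ← hx]
  · rintro ⟨z, rfl⟩
    exact ⟨Int.cast ∘ z, (hcast z).symm⟩

variable {ι κ : Type*} [Fintype ι] [Fintype κ] [DecidableEq κ] {M : ℕ}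

theorem card_ker_mulVecLin_intCast_of_square [NeZero M] {B C : Matrix κ κ ℤ}
    (h : B * C = (M : ℤ) • 1) :
    Nat.card (B.map (Int.cast : ℤ → ZMod M)).mulVecLin.ker = B.det.natAbs := by
  let ρ : (κ → ℤ) →+ (κ → ZMod M) := (Int.castAddHom (ZMod M)).compLeft κ
  let Bmod := (B.map (Int.cast : ℤ → ZMod M)).mulVecLin.toAddMonoidHom
  have hρ : Function.Surjective ρ := ZMod.intCast_surjective.comp_left
  have hcomap : Bmod.range.comap ρ = B.mulVecLin.toAddMonoidHom.range :=
    AddSubgroup.ext (intCast_comp_mem_range_mulVecLin_iff h)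
  have hdet : B.det ≠ 0 := by
    refine left_ne_zero_of_mul (b := C.det) ?_
    rw [← det_mul, h, det_smul, det_one, mul_one]
    exact pow_ne_zero _ (NeZero.ne _)
  calc Nat.card Bmod.ker = Bmod.range.index := AddSubgroup.index_range.symm
    _ = B.mulVecLin.toAddMonoidHom.range.index := by
      rw [← hcomap, AddSubgroup.index_comap_of_surjective _ hρ]
    _ = B.det.natAbs := by
      rw [index_range_eq_natAbs_det _ (mulVec_injective_of_det_ne_zero hdet), ← toLin'_apply',
        LinearMap.det_toLin']

theorem card_ker_mulVecLin_intCast_eq_absNorm [NeZero M] {A : Matrix ι κ ℤ} {T : Matrix κ ι ℤ}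
    (h : T * A = (M : ℤ) • 1) :
    Nat.card (A.map (Int.cast : ℤ → ZMod M)).mulVecLin.ker =
      Ideal.absNorm (maximalMinorIdeal A) := by
  obtain ⟨B, C, T', hAC, hBT⟩ := exists_square_matrix_mul_eq_and_eq_mul A
  have hBA : maximalMinorIdeal A = Ideal.span {B.det} := by
    rw [← maximalMinorIdeal_square]
    exact le_antisymm (hAC ▸ maximalMinorIdeal_mul_le C B) (hBT ▸ maximalMinorIdeal_mul_le T' A)
  have hker : (A.map (Int.cast : ℤ → ZMod M)).mulVecLin.ker =
      (B.map (Int.cast : ℤ → ZMod M)).mulVecLin.ker := by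
    apply le_antisymm
    · exact ker_mulVecLin_le_of_eq_mul (hBT ▸ Matrix.map_mul (f := Int.castRingHom (ZMod M)))
    · exact ker_mulVecLin_le_of_eq_mul (hAC ▸ Matrix.map_mul (f := Int.castRingHom (ZMod M)))
  have hTCB : T * C * B = (M : ℤ) • 1 := by rw [Matrix.mul_assoc, ← hAC, h]
  have hBTC : B * (T * C) = (M : ℤ) • 1 :=
    mul_eq_smul_one_symm (IsRegular.of_ne_zero (NeZero.ne (M : ℤ))).left hTCB
  rw [hker, card_ker_mulVecLin_intCast_of_square hBTC, hBA, Ideal.absNorm_span_singleton,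
    Algebra.norm_self, MonoidHom.id_apply]

end Count

section Ideals

open Ideal nonZeroDivisors

variable {A B : Type*} [CommRing A] [CommRing B] [Algebra A B]

theorem exists_span_singleton_mul_le_of_map_le (S : Submonoid A) [IsLocalization S B]
    {I J : Ideal A} (hI : I.FG)
    (h : I.map (algebraMap A B) ≤ J.map (algebraMap A B)) : ∃ s ∈ S, span {s} * I ≤ J := by
  induction I, hI using Submodule.fg_induction with
  | singleton x =>
    have hx : algebraMap A B x ∈ J.map (algebraMap A B) :=
      h (mem_map_of_mem _ (mem_span_singleton_self x))
    obtain ⟨s, hs, hsx⟩ := (IsLocalization.algebraMap_mem_map_algebraMap_iff S B J x).1 hx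
    refine ⟨s, hs, ?_⟩
    rwa [submodule_span_eq, span_singleton_mul_span_singleton, span_singleton_le_iff_mem]
  | sup I₁ I₂ _ _ ih₁ ih₂ =>
    rw [Ideal.map_sup, sup_le_iff] at h
    obtain ⟨s₁, hs₁, hle₁⟩ := ih₁ h.1
    obtain ⟨s₂, hs₂, hle₂⟩ := ih₂ h.2
    refine ⟨s₁ * s₂, S.mul_mem hs₁ hs₂, ?_⟩
    rw [Ideal.mul_sup, sup_le_iff, ← span_singleton_mul_span_singleton, mul_right_comm,
      mul_assoc _ _ I₂]
    exact ⟨mul_le_left.trans hle₁, mul_le_right.trans hle₂⟩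

theorem exists_mem_map_eq_map_span_singleton (S : Submonoid A) [IsLocalization S B]
    [IsPrincipalIdealRing B] (I : Ideal A) :
    ∃ f ∈ I, I.map (algebraMap A B) = (span {f}).map (algebraMap A B) := by
  obtain ⟨F, hF⟩ := IsPrincipalIdealRing.principal (I.map (algebraMap A B))
  obtain ⟨⟨f, s⟩, hFf⟩ := (IsLocalization.mem_map_algebraMap_iff S B).1
    (hF.ge (mem_span_singleton_self F))
  refine ⟨f, f.2, ?_⟩
  rw [map_span, Set.image_singleton, ← hFf,
    span_singleton_mul_right_unit (IsLocalization.map_units B s), hF]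

theorem eq_span_singleton_mul_colon_of_le {f : A} {I : Ideal A} (h : I ≤ span {f}) :
    I = span {f} * I.colon {f} := by
  refine (eq_span_singleton_mul _ _).2 ⟨fun g hg => ?_, fun g hg => ?_⟩
  · obtain ⟨c, rfl⟩ := mem_span_singleton.1 (h hg)
    exact ⟨c, by rwa [Submodule.mem_colon_singleton, smul_eq_mul, mul_comm], rfl⟩
  · rwa [Submodule.mem_colon_singleton, smul_eq_mul, mul_comm] at hg

theorem exists_span_C_mul_eq_span_singleton_mul {R : Type*} [CommRing R] [IsDomain R]
    {I : Ideal R[X]} (hI : I.FG) :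
    ∃ (f : R[X]) (E : R) (J : Ideal R[X]), E ≠ 0 ∧ C E ∈ J ∧
      span {C E} * I = span {f} * J := by
  let K := FractionRing R
  let := Polynomial.algebra R K
  let S : Submonoid R[X] := R⁰.map (C : R →+* R[X])
  have : IsLocalization S K[X] := Polynomial.isLocalization R⁰ K
  obtain ⟨f, hf, hmap⟩ := exists_mem_map_eq_map_span_singleton (B := K[X]) S I
  obtain ⟨_, ⟨E, hE, rfl⟩, hle⟩ := exists_span_singleton_mul_le_of_map_le S hI hmap.le
  refine ⟨f, E, (span {C E} * I).colon {f}, nonZeroDivisors.ne_zero hE, ?_,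
    eq_span_singleton_mul_colon_of_le hle⟩
  exact Submodule.mem_colon_singleton.2 (mul_mem_mul (mem_span_singleton_self _) hf)

theorem absNorm_map_eval_mul {I J : Ideal ℤ[X]} {f g : ℤ[X]} (h : span {g} * I = span {f} * J)
    (q : ℤ) :
    (g.eval q).natAbs * absNorm (I.map (evalRingHom q)) =
      (f.eval q).natAbs * absNorm (J.map (evalRingHom q)) := by
  simpa [Ideal.map_mul, Ideal.map_span, absNorm_span_singleton, Algebra.norm_self] using
    congrArg (fun K => absNorm (K.map (evalRingHom q))) h

theorem map_evalRingHom_le_of_dvd_sub {R : Type*} [CommRing R] {J : Ideal R[X]} {E x y : R}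
    (hE : C E ∈ J) (h : E ∣ x - y) :
    J.map (evalRingHom x) ≤ J.map (evalRingHom y) := by
  refine Ideal.map_le_iff_le_comap.2 fun p hp => ?_
  have hEy : E ∈ J.map (evalRingHom y) := by simpa using mem_map_of_mem (evalRingHom y) hE
  have hsub := Ideal.mem_of_dvd _ (h.trans (sub_dvd_eval_sub x y p)) hEy
  exact (Submodule.sub_mem_iff_left _ (mem_map_of_mem (evalRingHom y) hp)).1 hsub

theorem periodic_absNorm_map_eval {J : Ideal ℤ[X]} {E : ℤ} (hE : C E ∈ J) :
    Function.Periodic (fun q : ℤ => absNorm (J.map (evalRingHom q))) E.natAbs := by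
  intro q
  have hdvd : E ∣ q + E.natAbs - q := by simp
  exact congrArg absNorm (le_antisymm (map_evalRingHom_le_of_dvd_sub hE hdvd)
    (map_evalRingHom_le_of_dvd_sub hE (dvd_sub_comm.1 hdvd)))

theorem exists_absNorm_map_eval_eq (I : Ideal ℤ[X]) :
    ∃ (f : ℤ[X]) (m : ℕ) (c : ℤ → ℚ), 0 < m ∧ Function.Periodic c m ∧
      ∀ q : ℤ, (absNorm (I.map (evalRingHom q)) : ℚ) = c q * (|f.eval q| : ℤ) := by
  obtain ⟨f, E, J, hE, hEJ, h⟩ := exists_span_C_mul_eq_span_singleton_mul I.fg_of_isNoetherianRing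
  have hper := periodic_absNorm_map_eval hEJ
  refine ⟨f, E.natAbs, fun q => absNorm (J.map (evalRingHom q)) / E.natAbs, Int.natAbs_pos.2 hE,
    hper.comp fun x : ℕ => (x / E.natAbs : ℚ), fun q => ?_⟩
  have hq : (E.natAbs : ℚ) * absNorm (I.map (evalRingHom q)) =
      (f.eval q).natAbs * absNorm (J.map (evalRingHom q)) := by
    have hnat := absNorm_map_eval_mul h q
    rw [eval_C] at hnat
    exact_mod_cast hnat
  have hE0 : (E.natAbs : ℚ) ≠ 0 := Nat.cast_ne_zero.2 (Int.natAbs_ne_zero.2 hE)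
  rw [Int.abs_eq_natAbs, Int.cast_natCast, div_mul_eq_mul_div, eq_div_iff hE0,
    mul_comm, hq, mul_comm]

end Ideals

section PeriodicFunctions

open Finset Submodule

theorem sum_range_sub_eq_of_periodic {α : Type*} [AddCancelCommMonoid α] {f : ℤ → α} {m : ℕ}
    (hf : Function.Periodic f m) (q : ℤ) :
    ∑ j ∈ range m, f (q - j) = ∑ j ∈ range m, f (-j) := by
  have hS : Function.Periodic (fun q => ∑ j ∈ range m, f (q - j)) 1 := by
    intro q
    have h := (sum_range_succ (fun j : ℕ => f (q + 1 - j)) m).symm.trans (sum_range_succ' _ m)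
    have hm : f (q + 1 - m) = f (q + 1) := hf.sub_eq _
    simpa [hm] using h
  simpa using hS.int_mul_eq q

/-- The function `q ↦ gcd(q - n, m)`. -/
def shiftedGcd (m : ℕ) (n : ℤ) : ℤ → ℚ :=
  fun q => Int.gcd (q - n) m

/-- The indicator function of the residue class of `n` modulo `m`. -/
def residueIndicator (m : ℕ) (n : ℤ) : ℤ → ℚ :=
  fun q => if (m : ℤ) ∣ q - n then 1 else 0

/-- The space of functions of the shape `q ↦ α + ∑ᵢ αᵢ gcd(q - nᵢ, mᵢ)` with `0 < nᵢ < mᵢ`. -/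
def shiftedGcdSpan : Submodule ℚ (ℤ → ℚ) :=
  span ℚ (insert 1 {c | ∃ m n : ℕ, 0 < n ∧ n < m ∧ c = shiftedGcd m n})

theorem periodic_intGcd (m : ℕ) : Function.Periodic (fun x : ℤ => (Int.gcd x m : ℚ)) m :=
  fun x => by simp

theorem shiftedGcd_emod (m : ℕ) (n : ℤ) : shiftedGcd m (n % m) = shiftedGcd m n := by
  funext q
  have h : q - n % m = q - n + (n / m) * m := by linarith [Int.emod_add_ediv_mul n m]
  rw [shiftedGcd, shiftedGcd, h]
  exact (periodic_intGcd m).int_mul (n / m) (q - n)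

theorem sum_range_shiftedGcd (m : ℕ) :
    ∑ j ∈ range m, shiftedGcd m j = fun _ => ∑ j ∈ range m, (Int.gcd (-j) m : ℚ) := by
  funext q
  simpa [shiftedGcd] using sum_range_sub_eq_of_periodic (periodic_intGcd m) q

theorem const_mem_shiftedGcdSpan (c : ℚ) : (fun _ => c) ∈ shiftedGcdSpan := by
  have h : (fun _ : ℤ => c) = c • (1 : ℤ → ℚ) := by ext; simp
  exact h ▸ smul_mem _ c (subset_span (Set.mem_insert _ _))

theorem shiftedGcd_mem_shiftedGcdSpan {m : ℕ} (hm : 0 < m) (n : ℤ) :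
    shiftedGcd m n ∈ shiftedGcdSpan := by
  have hpos {j : ℕ} (hj : 0 < j) (hjm : j < m) : shiftedGcd m j ∈ shiftedGcdSpan :=
    subset_span (Set.mem_insert_of_mem _ ⟨m, j, hj, hjm, rfl⟩)
  have hzero : shiftedGcd m (0 : ℕ) ∈ shiftedGcdSpan := by
    have hsum := sum_range_shiftedGcd m
    rw [sum_range_eq_add_Ico _ hm, ← eq_sub_iff_add_eq] at hsum
    rw [hsum]
    refine sub_mem (const_mem_shiftedGcdSpan _) (sum_mem fun j hj => ?_)
    exact hpos (mem_Ico.1 hj).1 (mem_Ico.1 hj).2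
  rw [← shiftedGcd_emod]
  obtain ⟨r, hr⟩ := Int.eq_ofNat_of_zero_le (Int.emod_nonneg n (by positivity : (m : ℤ) ≠ 0))
  have hrm : r < m := Int.ofNat_lt.1 (hr ▸ Int.emod_lt_of_pos n (Int.natCast_pos.2 hm))
  rw [hr]
  rcases r.eq_zero_or_pos with rfl | hr0
  exacts [hzero, hpos hr0 hrm]

theorem intGcd_eq_sum_totient (a : ℤ) {m : ℕ} (hm : m ≠ 0) :
    Int.gcd a m = ∑ d ∈ m.divisors, if (d : ℤ) ∣ a then d.totient else 0 := by
  have h : m.divisors.filter (fun d : ℕ => (d : ℤ) ∣ a) = (Int.gcd a m).divisors := by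
    ext d
    simp [← Int.natCast_dvd_natCast, Int.dvd_coe_gcd_iff, hm, and_comm]
  rw [← sum_filter, h, Nat.sum_totient]

theorem shiftedGcd_eq_sum_residueIndicator {m : ℕ} (hm : m ≠ 0) (n : ℤ) :
    shiftedGcd m n = ∑ d ∈ m.divisors, (d.totient : ℚ) • residueIndicator d n := by
  funext q
  simp [shiftedGcd, residueIndicator, intGcd_eq_sum_totient _ hm]

theorem residueIndicator_mem_shiftedGcdSpan {m : ℕ} (hm : 0 < m) (n : ℤ) :
    residueIndicator m n ∈ shiftedGcdSpan := by
  induction m using Nat.strong_induction_on with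
  | _ m ih =>
    have hsum := shiftedGcd_eq_sum_residueIndicator hm.ne' n
    rw [← Nat.insert_self_properDivisors hm.ne', sum_insert Nat.self_notMem_properDivisors,
      ← sub_eq_iff_eq_add] at hsum
    have hφ : (m.totient : ℚ) ≠ 0 := Nat.cast_ne_zero.2 (Nat.totient_pos.2 hm).ne'
    refine (smul_mem_iff _ hφ).1 ?_
    rw [← hsum]
    refine sub_mem (shiftedGcd_mem_shiftedGcdSpan hm n) (sum_mem fun d hd => smul_mem _ _ ?_)
    exact ih d (Nat.mem_properDivisors.1 hd).2 (Nat.pos_of_mem_properDivisors hd)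

theorem eq_sum_residueIndicator_of_periodic {m : ℕ} (hm : 0 < m) {c : ℤ → ℚ}
    (hc : Function.Periodic c m) :
    c = ∑ j ∈ Ico (0 : ℤ) m, c j • residueIndicator m j := by
  funext q
  have hmz : (0 : ℤ) < m := Int.natCast_pos.2 hm
  have hmem : q % m ∈ Ico (0 : ℤ) m :=
    mem_Ico.2 ⟨Int.emod_nonneg q hmz.ne', Int.emod_lt_of_pos q hmz⟩
  have hcq : c (q % m) = c q := by
    rw [Int.emod_def, mul_comm]
    exact hc.sub_int_mul_eq _
  have hne (j : ℤ) (hj : j ∈ Ico (0 : ℤ) m) (hjq : j ≠ q % m) : ¬ (m : ℤ) ∣ q - j := by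
    intro hdvd
    have hmod : j % m = q % m := Int.modEq_iff_dvd.2 hdvd
    rw [Int.emod_eq_of_lt (mem_Ico.1 hj).1 (mem_Ico.1 hj).2] at hmod
    exact hjq hmod
  rw [Finset.sum_apply, sum_eq_single_of_mem _ hmem fun j hj hjq => ?_]
  · simp [residueIndicator, Int.dvd_self_sub_emod, hcq]
  · simp [residueIndicator, hne j hj hjq]

theorem mem_shiftedGcdSpan_of_periodic {m : ℕ} (hm : 0 < m) {c : ℤ → ℚ}
    (hc : Function.Periodic c m) : c ∈ shiftedGcdSpan := by
  rw [eq_sum_residueIndicator_of_periodic hm hc]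
  exact sum_mem fun j _ => smul_mem _ _ (residueIndicator_mem_shiftedGcdSpan hm j)

theorem exists_eq_add_sum_gcd_of_mem_shiftedGcdSpan {c : ℤ → ℚ} (hc : c ∈ shiftedGcdSpan) :
    ∃ (r : ℕ) (α : ℚ) (a : Fin r → ℚ) (m nn : Fin r → ℤ),
      (∀ i, 1 < m i) ∧ (∀ i, 0 < nn i ∧ nn i < m i) ∧
      ∀ q, c q = α + ∑ i, a i * (Int.gcd (q - nn i) (m i) : ℚ) := by
  obtain ⟨α, z, hz, rfl⟩ := mem_span_insert.1 hc
  obtain ⟨r, a, g, rfl⟩ := mem_span_set'.1 hz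
  choose m n hn hnm hg using fun i => (g i).2
  refine ⟨r, α, a, fun i => m i, fun i => n i, fun i => ?_, fun i => ?_, fun q => ?_⟩
  · exact Nat.one_lt_cast.2 (Nat.lt_of_le_of_lt (hn i) (hnm i))
  · exact ⟨Nat.cast_pos.2 (hn i), Nat.cast_lt.2 (hnm i)⟩
  · simp [hg, shiftedGcd]

end PeriodicFunctions

theorem card_solutions_eq_absNorm {ι κ : Type*} [Fintype ι] [Fintype κ] [DecidableEq κ]
    {P : ℤ[X]} {A : Matrix ι κ ℤ[X]} {T : Matrix κ ι ℤ[X]} (hTA : T * A = P • 1) {q : ℤ} {M : ℕ}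
    (hM : M ≠ 0) (hP : P.eval q ∣ M) :
    Nat.card {y : κ → ZMod M // (A.map fun p => ((p.eval q : ℤ) : ZMod M)).mulVec y = 0} =
      Ideal.absNorm ((maximalMinorIdeal A).map (evalRingHom q)) := by
  obtain ⟨s, hs⟩ := hP
  have := NeZero.mk hM
  have hTAq : T.map (evalRingHom q) * A.map (evalRingHom q) = P.eval q • 1 := by
    rw [← Matrix.map_mul, hTA, Matrix.map_smul' _ _ _ (map_mul _)]
    simp
  have h : s • T.map (evalRingHom q) * A.map (evalRingHom q) = (M : ℤ) • 1 := by
    rw [smul_mul, hTAq, smul_smul, hs, mul_comm]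
  rw [map_maximalMinorIdeal]
  exact card_ker_mulVecLin_intCast_eq_absNorm h

theorem card_solutions_PORC_general {ι κ : Type*} [Fintype ι] [Fintype κ] [DecidableEq κ]
    {P : ℤ[X]} {A : Matrix ι κ ℤ[X]} {T : Matrix κ ι ℤ[X]} (hTA : T * A = P • 1) :
    ∃ (f : ℤ[X]) (r : ℕ) (α : ℚ) (a : Fin r → ℚ) (m : Fin r → ℤ) (nn : Fin r → ℤ),
      (∀ i, 1 < m i) ∧ (∀ i, 0 < nn i ∧ nn i < m i) ∧
      ∀ (q : ℤ) (M : ℕ), M ≠ 0 → P.eval q ∣ M →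
        (Nat.card {y : κ → ZMod M //
            (A.map fun p => ((p.eval q : ℤ) : ZMod M)).mulVec y = 0} : ℚ) =
          (α + ∑ i, a i * (Int.gcd (q - nn i) (m i) : ℚ)) * ((|f.eval q| : ℤ) : ℚ) := by
  obtain ⟨f, N, c, hN, hc, hf⟩ := exists_absNorm_map_eval_eq (maximalMinorIdeal A)
  obtain ⟨r, α, a, m, nn, hm, hnn, hcq⟩ :=
    exists_eq_add_sum_gcd_of_mem_shiftedGcdSpan (mem_shiftedGcdSpan_of_periodic hN hc)
  refine ⟨f, r, α, a, m, nn, hm, hnn, fun q M hM hP => ?_⟩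
  rw [card_solutions_eq_absNorm hTA hM hP, hf, hcq]

/-- Let `A` be a matrix over `ℤ[X]` with `k` columns whose rows include `(X^n - 1)·e_j`
for every `j`. Then the number of solutions `y ∈ (ℤ/(qⁿ-1)ℤ)^k` of `A(q)·y = 0`,
as a function of `q ≥ 2`, is a PORC function of the explicit form
`(α + ∑ᵢ αᵢ gcd(q - nᵢ, mᵢ))·|f(q)|`. -/
theorem card_solutions_PORC (n k : ℕ) (hn : 0 < n) (hk : 0 < k) (t : ℕ)
    (A : Matrix (Fin t) (Fin k) (Polynomial ℤ))
    (hA : ∀ j : Fin k, ∃ i : Fin t, A i = Pi.single j (Polynomial.X ^ n - 1)) :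
    ∃ (f : Polynomial ℤ) (r : ℕ) (α : ℚ) (a : Fin r → ℚ) (m : Fin r → ℤ) (nn : Fin r → ℤ),
      (∀ i, 1 < m i) ∧ (∀ i, 0 < nn i ∧ nn i < m i) ∧
      ∀ q : ℕ, 2 ≤ q →
        (Nat.card {y : Fin k → ZMod (q ^ n - 1) //
            (A.map fun p => ((p.eval (q : ℤ) : ℤ) : ZMod (q ^ n - 1))).mulVec y = 0} : ℚ) =
          (α + ∑ i, a i * (Int.gcd ((q : ℤ) - nn i) (m i) : ℚ)) *
            ((|f.eval (q : ℤ)| : ℤ) : ℚ) := by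
  obtain ⟨T, hTA⟩ := exists_mul_eq_smul_one_of_rows hA
  obtain ⟨f, r, α, a, m, nn, hm, hnn, h⟩ := card_solutions_PORC_general hTA
  refine ⟨f, r, α, a, m, nn, hm, hnn, fun q hq => ?_⟩
  have hpow : 1 < q ^ n := Nat.one_lt_pow hn.ne' hq
  refine h q (q ^ n - 1) (Nat.sub_ne_zero_of_lt hpow) ?_
  simp [Nat.cast_sub hpow.le]
end
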